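/- Let d ≥ 1, 1 < p ≤ 2, and k = 2d(1/p − 1/2). There exists a constant C > 0 such that for every Schwartz function f on ℝ^d: (∫_{ℝ^d} (1+|ξ|²)^{−kp/2} |ℱf(ξ)|^p dξ)^{1/p} ≤ C·‖f‖_{L^p(ℝ^d)}. -/

import Mathlib

open MeasureTheory Complex Real
open scoped ENNReal RealInnerProductSpace

noncomputable section

abbrev E (d : ℕ) : Type := EuclideanSpace ℝ (Fin d)

/-- The Fourier transform `ℱu(ξ) = ∫ exp(-i x·ξ) u(x) dx`. -/
def FT (d : ℕ) (u : E d → ℂ) (ξ : E d) : ℂ :=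
  ∫ x, Complex.exp (-Complex.I * (⟪x, ξ⟫ : ℂ)) * u x

open scoped FourierTransform in
theorem FT_eq_fourier {d : ℕ} (f : SchwartzMap (E d) ℂ) (ξ : E d) :
    FT d f ξ = (𝓕 f : SchwartzMap (E d) ℂ) ((2 * π)⁻¹ • ξ) := by
  rw [SchwartzMap.fourier_coe, Real.fourier_eq', FT]
  congr 1 with x
  rw [smul_eq_mul, real_inner_smul_right]
  congr 2
  have : (π : ℂ) ≠ 0 := by exact_mod_cast Real.pi_ne_zero
  push_cast
  field_simp

theorem continuous_FT {d : ℕ} (f : SchwartzMap (E d) ℂ) : Continuous (FT d f) := by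
  simp_rw [funext (FT_eq_fourier f)]
  exact (SchwartzMap.continuous _).comp (continuous_const_smul _)

theorem FT_add {d : ℕ} (g h : SchwartzMap (E d) ℂ) (ξ : E d) :
    FT d (g + h : SchwartzMap (E d) ℂ) ξ = FT d g ξ + FT d h ξ := by
  simp only [FT_eq_fourier, FourierTransform.fourier_add, add_apply]

theorem norm_FT_le {d : ℕ} (f : SchwartzMap (E d) ℂ) (ξ : E d) :
    ‖FT d f ξ‖ ≤ ∫ x, ‖f x‖ := by
  rw [FT_eq_fourier]
  exact (f.norm_fourier_apply_le_toLp_one _).trans_eq SchwartzMap.norm_toLp_one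

theorem SchwartzMap.integrable_norm_sq {d : ℕ} (f : SchwartzMap (E d) ℂ) :
    Integrable fun x ↦ ‖f x‖ ^ 2 :=
  (f.memLp 2).integrable_norm_pow (by simp)

theorem lintegral_norm_FT_sq {d : ℕ} (f : SchwartzMap (E d) ℂ) :
    ∫⁻ ξ, ENNReal.ofReal (‖FT d f ξ‖ ^ 2) =
      ENNReal.ofReal ((2 * π) ^ d) * ∫⁻ x, ENNReal.ofReal (‖f x‖ ^ 2) := by
  have hi := (FourierTransform.fourier f : SchwartzMap (E d) ℂ).integrable_norm_sq
  have hpi : (2 * π)⁻¹ ≠ 0 := by positivity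
  have hs : Integrable fun ξ ↦ ‖FT d f ξ‖ ^ 2 := by
    simp_rw [FT_eq_fourier]
    exact hi.comp_smul hpi
  rw [← ofReal_integral_eq_lintegral_ofReal hs (.of_forall fun _ ↦ by positivity),
    ← ofReal_integral_eq_lintegral_ofReal f.integrable_norm_sq (.of_forall fun _ ↦ by positivity),
    ← ENNReal.ofReal_mul (by positivity)]
  simp_rw [FT_eq_fourier]
  rw [Measure.integral_comp_smul volume
    (fun ξ ↦ ‖(FourierTransform.fourier f : SchwartzMap (E d) ℂ) ξ‖ ^ 2),
    f.integral_norm_sq_fourier]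
  congr 1
  rw [finrank_euclideanSpace_fin, inv_pow, inv_inv, abs_of_nonneg (by positivity), smul_eq_mul]

/-- Smooth truncation of a Schwartz function at height `t`. -/
theorem SchwartzMap.exists_truncation {d : ℕ} (f : SchwartzMap (E d) ℂ) {t : ℝ} (ht : 0 < t) :
    ∃ g h : SchwartzMap (E d) ℂ, f = g + h ∧
      (∀ x, ‖g x‖ ≤ if t < ‖f x‖ then ‖f x‖ else 0) ∧
      (∀ x, ‖h x‖ ≤ if ‖f x‖ < 2 * t then ‖f x‖ else 0) := by
  set ψ : E d → ℝ := fun x ↦ smoothTransition (‖f x‖ ^ 2 / t ^ 2 - 1)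
  have hψ_nonneg (x) : 0 ≤ ψ x := smoothTransition.nonneg _
  have hψ_le (x) : ψ x ≤ 1 := smoothTransition.le_one _
  have hψ0 (x) (hx : ‖f x‖ ≤ t) : ψ x = 0 := by
    apply smoothTransition.zero_of_nonpos
    rw [sub_nonpos, div_le_one (by positivity)]
    gcongr
  have hψ1 (x) (hx : 2 * t ≤ ‖f x‖) : ψ x = 1 := by
    apply smoothTransition.one_of_one_le
    rw [le_sub_iff_add_le, le_div_iff₀ (by positivity)]
    nlinarith
  have hsmooth : ContDiff ℝ (⊤ : ℕ∞) ψ := by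
    refine smoothTransition.contDiff.comp ?_
    exact (((f.smooth _).norm_sq ℝ).div_const _).sub contDiff_const
  have hsupp : HasCompactSupport fun x ↦ (ψ x : ℂ) * f x := by
    have hlim := f.toZeroAtInfty.zero_at_infty'
    have hev : ∀ᶠ x in Filter.cocompact (E d), ‖f x‖ < t := by
      have := hlim.norm
      rw [norm_zero] at this
      exact this.eventually_lt_const ht
    obtain ⟨K, hK, hKt⟩ := Filter.mem_cocompact.1 hev
    refine HasCompactSupport.intro hK fun x hx ↦ ?_
    rw [hψ0 x (le_of_lt (hKt hx))]
    rw [ofReal_zero, zero_mul]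
  have hg : ContDiff ℝ (⊤ : ℕ∞) fun x ↦ (ψ x : ℂ) * f x :=
    (ofRealCLM.contDiff.comp hsmooth).mul (f.smooth _)
  have hgx (x) : (hsupp.toSchwartzMap hg) x = ψ x * f x := rfl
  refine ⟨hsupp.toSchwartzMap hg, f - hsupp.toSchwartzMap hg, by simp, fun x ↦ ?_, fun x ↦ ?_⟩
  · rw [hgx, norm_mul, norm_real, Real.norm_of_nonneg (hψ_nonneg x)]
    split_ifs with h
    · exact mul_le_of_le_one_left (norm_nonneg _) (hψ_le x)
    · rw [hψ0 x (not_lt.1 h), zero_mul]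
  · have : f x - ψ x * f x = ((1 - ψ x : ℝ) : ℂ) * f x := by push_cast; ring
    rw [sub_apply, hgx, this, norm_mul, norm_real,
      Real.norm_of_nonneg (sub_nonneg.2 (hψ_le x))]
    split_ifs with h
    · exact mul_le_of_le_one_left (norm_nonneg _) (sub_le_self _ (hψ_nonneg x))
    · rw [hψ1 x (not_lt.1 h), sub_self, zero_mul]

/-- The measure `(1 + |ξ|²)^{-d} dξ`. -/
def japaneseMeasure (d : ℕ) : Measure (E d) :=
  volume.withDensity fun ξ ↦ ENNReal.ofReal ((1 + ‖ξ‖ ^ 2) ^ (-(d : ℝ)))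

theorem japaneseMeasure_tail (d : ℕ) (hd : 1 ≤ d) :
    ∃ C ≥ (0 : ℝ), ∀ s > (0 : ℝ), japaneseMeasure d {ξ | s < (1 + ‖ξ‖ ^ 2) ^ ((d : ℝ) / 2)} ≤
      ENNReal.ofReal (C / s) := by
  have hd0 : (0 : ℝ) < d := by exact_mod_cast hd
  have hI : Integrable fun ξ : E d ↦ (1 + ‖ξ‖ ^ 2) ^ (-(d : ℝ)) := by
    have := integrable_rpow_neg_one_add_norm_sq (E := E d) (μ := volume) (r := 2 * d)
      (by rw [finrank_euclideanSpace_fin]; linarith)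
    simpa [neg_div] using this
  refine ⟨2 ^ (d : ℝ) * ∫ ξ : E d, (1 + ‖ξ‖ ^ 2) ^ (-(d : ℝ)), by positivity, fun s hs ↦ ?_⟩
  set r : ℝ := s ^ (1 / (d : ℝ)) with hr
  have hr0 : 0 < r := rpow_pos_of_pos hs _
  have hrs : r ^ d = s := by
    rw [hr, ← rpow_natCast, ← rpow_mul hs.le, one_div_mul_cancel hd0.ne', rpow_one]
  have hmeas : MeasurableSet {ξ : E d | s < (1 + ‖ξ‖ ^ 2) ^ ((d : ℝ) / 2)} :=
    measurableSet_lt measurable_const (by fun_prop)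
  have hscaled : Integrable fun ξ : E d ↦ (1 + ‖r⁻¹ • ξ‖ ^ 2) ^ (-(d : ℝ)) :=
    hI.comp_smul (inv_ne_zero hr0.ne')
  rw [japaneseMeasure, withDensity_apply _ hmeas]
  calc
    _ ≤ ∫⁻ ξ in {ξ : E d | s < (1 + ‖ξ‖ ^ 2) ^ ((d : ℝ) / 2)},
        ENNReal.ofReal (2 ^ (d : ℝ) * (s ^ 2)⁻¹ * (1 + ‖r⁻¹ • ξ‖ ^ 2) ^ (-(d : ℝ))) := by
      refine setLIntegral_mono (by fun_prop) fun ξ hξ ↦ ENNReal.ofReal_le_ofReal ?_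
      have h1 : r ^ 2 ≤ 1 + ‖ξ‖ ^ 2 := by
        have h2 : s ^ (2 / (d : ℝ)) ≤ ((1 + ‖ξ‖ ^ 2) ^ ((d : ℝ) / 2)) ^ (2 / (d : ℝ)) :=
          rpow_le_rpow hs.le (le_of_lt hξ) (by positivity)
        rw [← rpow_mul (by positivity), div_mul_div_cancel₀ (by positivity), div_self (by positivity),
          rpow_one] at h2
        rwa [hr, ← rpow_natCast, ← rpow_mul hs.le, one_div_mul_eq_div]
      have h3 : s ^ 2 = (r ^ 2) ^ (d : ℝ) := by
        rw [rpow_natCast, ← hrs]; ring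
      rw [h3, rpow_neg (by positivity), rpow_neg (by positivity),
        ← inv_rpow (by positivity), ← inv_rpow (by positivity), ← inv_rpow (by positivity),
        ← mul_rpow (by positivity) (by positivity), ← mul_rpow (by positivity) (by positivity)]
      refine rpow_le_rpow (by positivity) ?_ hd0.le
      rw [norm_smul, norm_inv, Real.norm_of_nonneg hr0.le]
      have h4 : 2 * (r ^ 2)⁻¹ * (1 + (r⁻¹ * ‖ξ‖) ^ 2)⁻¹ = 2 / (r ^ 2 + ‖ξ‖ ^ 2) := by
        field_simp
      rw [h4, inv_eq_one_div, div_le_div_iff₀ (by positivity) (by positivity)]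
      nlinarith [sq_nonneg ‖ξ‖]
    _ ≤ ∫⁻ ξ, ENNReal.ofReal (2 ^ (d : ℝ) * (s ^ 2)⁻¹ * (1 + ‖r⁻¹ • ξ‖ ^ 2) ^ (-(d : ℝ))) :=
      setLIntegral_le_lintegral _ _
    _ = _ := by
      rw [← ofReal_integral_eq_lintegral_ofReal (hscaled.const_mul _)
        (.of_forall fun _ ↦ by positivity), integral_const_mul,
        Measure.integral_comp_smul volume (fun ξ : E d ↦ (1 + ‖ξ‖ ^ 2) ^ (-(d : ℝ)))]
      congr 1
      rw [finrank_euclideanSpace_fin, inv_pow, inv_inv, hrs, abs_of_pos hs, smul_eq_mul]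
      field_simp

/-- The distribution function estimate obtained from the weak `(1, 1)` and strong `(2, 2)` bounds for
`f ↦ (1 + |ξ|²)^{d/2} |ℱf(ξ)|`. -/
theorem japaneseMeasure_FT_le (d : ℕ) (hd : 1 ≤ d) :
    ∃ C ≥ (0 : ℝ), ∀ f : SchwartzMap (E d) ℂ, ∀ t > (0 : ℝ),
      japaneseMeasure d {ξ | t < (1 + ‖ξ‖ ^ 2) ^ ((d : ℝ) / 2) * ‖FT d f ξ‖} ≤
        ENNReal.ofReal C *
          ((∫⁻ x, ENNReal.ofReal (if t < ‖f x‖ then t⁻¹ * ‖f x‖ else 0)) +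
           ∫⁻ x, ENNReal.ofReal (if ‖f x‖ < 2 * t then (t ^ 2)⁻¹ * ‖f x‖ ^ 2 else 0)) := by
  obtain ⟨A, hA, hAt⟩ := japaneseMeasure_tail d hd
  set C : ℝ := 2 * A + 4 * (2 * π) ^ d with hC
  have hpi : 0 ≤ 4 * (2 * π) ^ d := by positivity
  refine ⟨C, by positivity, fun f t ht ↦ ?_⟩
  obtain ⟨g, h, hf, hg, hh⟩ := f.exists_truncation ht
  have hsub : {ξ | t < (1 + ‖ξ‖ ^ 2) ^ ((d : ℝ) / 2) * ‖FT d f ξ‖} ⊆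
      {ξ | t / 2 < (1 + ‖ξ‖ ^ 2) ^ ((d : ℝ) / 2) * ‖FT d g ξ‖} ∪
      {ξ | t / 2 < (1 + ‖ξ‖ ^ 2) ^ ((d : ℝ) / 2) * ‖FT d h ξ‖} := by
    intro ξ hξ
    by_contra hcon
    simp only [Set.mem_union, Set.mem_ofPred_eq, not_or, not_lt] at hcon hξ
    have h1 : ‖FT d f ξ‖ ≤ ‖FT d g ξ‖ + ‖FT d h ξ‖ := by
      rw [hf, FT_add]; exact norm_add_le _ _
    have h2 := mul_le_mul_of_nonneg_left h1
      (show 0 ≤ (1 + ‖ξ‖ ^ 2) ^ ((d : ℝ) / 2) by positivity)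
    linarith [hcon.1, hcon.2]
  have hweak : japaneseMeasure d {ξ | t / 2 < (1 + ‖ξ‖ ^ 2) ^ ((d : ℝ) / 2) * ‖FT d g ξ‖} ≤
      ENNReal.ofReal C * ∫⁻ x, ENNReal.ofReal (if t < ‖f x‖ then t⁻¹ * ‖f x‖ else 0) := by
    set M := ∫ x, ‖g x‖ with hM
    have hM0 : 0 ≤ M := by positivity
    have hle : ENNReal.ofReal (t⁻¹ * M) ≤
        ∫⁻ x, ENNReal.ofReal (if t < ‖f x‖ then t⁻¹ * ‖f x‖ else 0) := by
      rw [hM, ← integral_const_mul, ofReal_integral_eq_lintegral_ofReal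
        (g.integrable.norm.const_mul _) (.of_forall fun _ ↦ by positivity)]
      refine lintegral_mono fun x ↦ ENNReal.ofReal_le_ofReal ?_
      refine (mul_le_mul_of_nonneg_left (hg x) (by positivity)).trans_eq ?_
      rw [mul_ite, mul_zero]
    refine le_trans ?_ (mul_le_mul_right hle _)
    rcases hM0.eq_or_lt with hM0 | hM0
    · have : {ξ | t / 2 < (1 + ‖ξ‖ ^ 2) ^ ((d : ℝ) / 2) * ‖FT d g ξ‖} = ∅ := by
        ext ξ
        have h1 := norm_FT_le g ξ
        have h2 : ‖FT d g ξ‖ = 0 := le_antisymm (h1.trans_eq hM0.symm) (norm_nonneg _)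
        have h3 : 0 ≤ t / 2 := by positivity
        simpa [h2] using h3
      simp [this]
    · calc
        _ ≤ japaneseMeasure d {ξ | t / (2 * M) < (1 + ‖ξ‖ ^ 2) ^ ((d : ℝ) / 2)} := by
          refine measure_mono fun ξ hξ ↦ ?_
          simp only [Set.mem_ofPred_eq] at hξ ⊢
          have h2 := mul_le_mul_of_nonneg_left (norm_FT_le g ξ)
            (show 0 ≤ (1 + ‖ξ‖ ^ 2) ^ ((d : ℝ) / 2) by positivity)
          rw [← div_div, div_lt_iff₀ hM0]
          exact hξ.trans_le h2
        _ ≤ _ := hAt _ (by positivity)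
        _ ≤ _ := by
          rw [← ENNReal.ofReal_mul (by positivity)]
          refine ENNReal.ofReal_le_ofReal ?_
          have : A / (t / (2 * M)) = 2 * A * (t⁻¹ * M) := by field_simp
          rw [this]
          gcongr
          linarith
  have hstrong : japaneseMeasure d {ξ | t / 2 < (1 + ‖ξ‖ ^ 2) ^ ((d : ℝ) / 2) * ‖FT d h ξ‖} ≤
      ENNReal.ofReal C *
        ∫⁻ x, ENNReal.ofReal (if ‖f x‖ < 2 * t then (t ^ 2)⁻¹ * ‖f x‖ ^ 2 else 0) := by
    have hFm : Measurable fun ξ ↦ ‖FT d h ξ‖ := (continuous_FT h).norm.measurable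
    have hmeas : MeasurableSet {ξ | t / 2 < (1 + ‖ξ‖ ^ 2) ^ ((d : ℝ) / 2) * ‖FT d h ξ‖} :=
      measurableSet_lt measurable_const (by fun_prop)
    rw [japaneseMeasure, withDensity_apply _ hmeas]
    calc
      _ ≤ ∫⁻ ξ in {ξ | t / 2 < (1 + ‖ξ‖ ^ 2) ^ ((d : ℝ) / 2) * ‖FT d h ξ‖},
          ENNReal.ofReal (4 * (t ^ 2)⁻¹) * ENNReal.ofReal (‖FT d h ξ‖ ^ 2) := by
        refine setLIntegral_mono (by fun_prop) fun ξ hξ ↦ ?_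
        rw [← ENNReal.ofReal_mul (by positivity)]
        refine ENNReal.ofReal_le_ofReal ?_
        simp only [Set.mem_ofPred_eq] at hξ
        have h1 : (t / 2) ^ 2 ≤ ((1 + ‖ξ‖ ^ 2) ^ ((d : ℝ) / 2) * ‖FT d h ξ‖) ^ 2 := by
          gcongr
        have h2 : ((1 + ‖ξ‖ ^ 2) ^ ((d : ℝ) / 2)) ^ 2 = (1 + ‖ξ‖ ^ 2) ^ (d : ℝ) := by
          rw [← rpow_natCast, ← rpow_mul (by positivity)]; congr 1; push_cast; ring
        rw [mul_pow, h2] at h1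
        rw [rpow_neg (by positivity), inv_le_iff_one_le_mul₀ (by positivity)]
        field_simp
        nlinarith
      _ ≤ ∫⁻ ξ, ENNReal.ofReal (4 * (t ^ 2)⁻¹) * ENNReal.ofReal (‖FT d h ξ‖ ^ 2) :=
        setLIntegral_le_lintegral _ _
      _ = ENNReal.ofReal (4 * (2 * π) ^ d) *
          ∫⁻ x, ENNReal.ofReal ((t ^ 2)⁻¹ * ‖h x‖ ^ 2) := by
        rw [lintegral_const_mul' _ _ ENNReal.ofReal_ne_top, lintegral_norm_FT_sq]
        simp_rw [ENNReal.ofReal_mul (show 0 ≤ (t ^ 2)⁻¹ by positivity)]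
        rw [lintegral_const_mul' _ _ ENNReal.ofReal_ne_top, ENNReal.ofReal_mul (by positivity),
          ENNReal.ofReal_mul (by positivity)]
        ring
      _ ≤ _ := by
        refine mul_le_mul' (ENNReal.ofReal_le_ofReal (by linarith))
          (lintegral_mono fun x ↦ ENNReal.ofReal_le_ofReal ?_)
        have h1 := hh x
        split_ifs at h1 ⊢
        · gcongr
        · simp [le_antisymm h1 (norm_nonneg _)]
  rw [mul_add]
  exact (measure_mono hsub).trans ((measure_union_le _ _).trans (add_le_add hweak hstrong))

theorem lintegral_Ioi_ite_lt_mul_rpow_le {a p : ℝ} (ha : 0 ≤ a) (hp : 1 < p) :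
    ∫⁻ t in Set.Ioi (0 : ℝ),
      ENNReal.ofReal (if t < a then t⁻¹ * a else 0) * ENNReal.ofReal (t ^ (p - 1)) ≤
        ENNReal.ofReal ((p - 1)⁻¹) * ENNReal.ofReal (a ^ p) := by
  rcases ha.eq_or_lt with rfl | ha
  · simp
  have hint : IntegrableOn (fun t : ℝ ↦ a * t ^ (p - 2)) (Set.Ioc 0 a) :=
    ((intervalIntegrable_iff_integrableOn_Ioc_of_le ha.le).1
      (intervalIntegral.intervalIntegrable_rpow' (by linarith))).const_mul _
  calc
    _ ≤ ∫⁻ t in Set.Ioi (0 : ℝ),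
        (Set.Ioc 0 a).indicator (fun t ↦ ENNReal.ofReal (a * t ^ (p - 2))) t := by
      refine setLIntegral_mono' measurableSet_Ioi fun t ht ↦ ?_
      have ht : 0 < t := ht
      split_ifs with h
      · rw [Set.indicator_of_mem (Set.mem_Ioc.2 ⟨ht, h.le⟩), ← ENNReal.ofReal_mul (by positivity)]
        refine ENNReal.ofReal_le_ofReal (le_of_eq ?_)
        rw [show p - 1 = p - 2 + 1 by ring, rpow_add_one ht.ne']
        field_simp
      · simp
    _ ≤ ∫⁻ t in Set.Ioc 0 a, ENNReal.ofReal (a * t ^ (p - 2)) :=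
      (setLIntegral_le_lintegral _ _).trans_eq (lintegral_indicator measurableSet_Ioc _)
    _ = _ := by
      rw [← ofReal_integral_eq_lintegral_ofReal hint
        (ae_restrict_of_forall_mem measurableSet_Ioc fun t ht ↦
          mul_nonneg ha.le (rpow_nonneg ht.1.le _)),
        ← intervalIntegral.integral_of_le ha.le, intervalIntegral.integral_const_mul,
        integral_rpow (Or.inl (by linarith)), ← ENNReal.ofReal_mul (inv_nonneg.2 (by linarith))]
      congr 1
      rw [show p - 2 + 1 = p - 1 by ring, zero_rpow (by linarith),
        show a ^ p = a ^ (p - 1) * a by rw [← rpow_add_one ha.ne']; congr 1; ring]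
      ring

theorem lintegral_Ioi_ite_gt_mul_rpow_le {a p : ℝ} (ha : 0 ≤ a) (hp : p < 2) :
    ∫⁻ t in Set.Ioi (0 : ℝ),
      ENNReal.ofReal (if a < 2 * t then (t ^ 2)⁻¹ * a ^ 2 else 0) * ENNReal.ofReal (t ^ (p - 1)) ≤
        ENNReal.ofReal (2 ^ (2 - p) * (2 - p)⁻¹) * ENNReal.ofReal (a ^ p) := by
  rcases ha.eq_or_lt with rfl | ha
  · simp
  have hint : IntegrableOn (fun t : ℝ ↦ a ^ 2 * t ^ (p - 3)) (Set.Ioi (a / 2)) :=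
    (integrableOn_Ioi_rpow_of_lt (by linarith) (by positivity)).const_mul _
  have hp2 : 0 < 2 - p := by linarith
  calc
    _ ≤ ∫⁻ t in Set.Ioi (0 : ℝ),
        (Set.Ioi (a / 2)).indicator (fun t ↦ ENNReal.ofReal (a ^ 2 * t ^ (p - 3))) t := by
      refine setLIntegral_mono' measurableSet_Ioi fun t ht ↦ ?_
      have ht : 0 < t := ht
      split_ifs with h
      · rw [Set.indicator_of_mem (show t ∈ Set.Ioi (a / 2) by rw [Set.mem_Ioi]; linarith),
          ← ENNReal.ofReal_mul (by positivity)]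
        refine ENNReal.ofReal_le_ofReal (le_of_eq ?_)
        rw [show p - 1 = p - 3 + (2 : ℕ) by push_cast; ring, rpow_add_natCast ht.ne']
        field_simp
      · simp
    _ ≤ ∫⁻ t in Set.Ioi (a / 2), ENNReal.ofReal (a ^ 2 * t ^ (p - 3)) :=
      (setLIntegral_le_lintegral _ _).trans_eq (lintegral_indicator measurableSet_Ioi _)
    _ = _ := by
      rw [← ofReal_integral_eq_lintegral_ofReal hint
        (ae_restrict_of_forall_mem measurableSet_Ioi fun t ht ↦
          mul_nonneg (sq_nonneg a) (rpow_nonneg ((half_pos ha).trans ht).le _)),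
        integral_const_mul, integral_Ioi_rpow_of_lt (by linarith) (by positivity),
        ← ENNReal.ofReal_mul (by positivity)]
      congr 1
      rw [show p - 3 + 1 = -(2 - p) by ring, rpow_neg (by positivity),
        div_rpow ha.le zero_le_two, neg_div_neg_eq,
        show a ^ p = a ^ (2 : ℕ) * (a ^ (2 - p))⁻¹ by
          rw [← rpow_neg ha.le, ← rpow_natCast, ← rpow_add ha]; congr 1; push_cast; ring]
      have : a ^ (2 - p) ≠ 0 := by positivity
      field_simp

theorem lintegral_japaneseMeasure_FT_le (d : ℕ) (hd : 1 ≤ d) {p : ℝ} (hp1 : 1 < p) (hp2 : p < 2) :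
    ∃ C ≥ (0 : ℝ), ∀ f : SchwartzMap (E d) ℂ,
      ∫⁻ ξ, ENNReal.ofReal (((1 + ‖ξ‖ ^ 2) ^ ((d : ℝ) / 2) * ‖FT d f ξ‖) ^ p)
          ∂(japaneseMeasure d) ≤
        ENNReal.ofReal C * ∫⁻ x, ENNReal.ofReal (‖f x‖ ^ p) := by
  obtain ⟨A, hA, hAt⟩ := japaneseMeasure_FT_le d hd
  have hc1 : 0 ≤ (p - 1)⁻¹ := inv_nonneg.2 (by linarith)
  have hc2 : 0 ≤ 2 ^ (2 - p) * (2 - p)⁻¹ := mul_nonneg (by positivity) (inv_nonneg.2 (by linarith))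
  refine ⟨p * (A * ((p - 1)⁻¹ + 2 ^ (2 - p) * (2 - p)⁻¹)), by positivity, fun f ↦ ?_⟩
  have hFm : Measurable fun ξ ↦ ‖FT d f ξ‖ := (continuous_FT f).norm.measurable
  have hfm : Measurable fun x ↦ ‖f x‖ := f.continuous.norm.measurable
  set φ : ℝ → E d → ℝ := fun t x ↦ if t < ‖f x‖ then t⁻¹ * ‖f x‖ else 0
  set χ : ℝ → E d → ℝ := fun t x ↦ if ‖f x‖ < 2 * t then (t ^ 2)⁻¹ * ‖f x‖ ^ 2 else 0
  have hφ : Measurable (Function.uncurry φ) :=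
    Measurable.ite (measurableSet_lt measurable_fst (by fun_prop)) (by fun_prop) measurable_const
  have hχ : Measurable (Function.uncurry χ) :=
    Measurable.ite (measurableSet_lt (by fun_prop) (by fun_prop)) (by fun_prop) measurable_const
  have hφ' : Measurable (Function.uncurry fun t x ↦
      ENNReal.ofReal (φ t x) * ENNReal.ofReal (t ^ (p - 1))) :=
    hφ.ennreal_ofReal.mul (by fun_prop)
  have hχ' : Measurable (Function.uncurry fun t x ↦
      ENNReal.ofReal (χ t x) * ENNReal.ofReal (t ^ (p - 1))) :=
    hχ.ennreal_ofReal.mul (by fun_prop)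
  rw [lintegral_rpow_eq_lintegral_meas_lt_mul _ (.of_forall fun ξ ↦ by positivity)
    (by fun_prop) (by linarith), ENNReal.ofReal_mul (by linarith), mul_assoc]
  gcongr
  calc
    _ ≤ ∫⁻ t in Set.Ioi (0 : ℝ), ENNReal.ofReal A *
        ((∫⁻ x, ENNReal.ofReal (φ t x) * ENNReal.ofReal (t ^ (p - 1))) +
          ∫⁻ x, ENNReal.ofReal (χ t x) * ENNReal.ofReal (t ^ (p - 1))) := by
      refine setLIntegral_mono' measurableSet_Ioi fun t ht ↦ ?_
      rw [lintegral_mul_const' _ _ ENNReal.ofReal_ne_top,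
        lintegral_mul_const' _ _ ENNReal.ofReal_ne_top, ← add_mul, ← mul_assoc]
      gcongr
      exact hAt f t ht
    _ = ENNReal.ofReal A *
        ((∫⁻ x, ∫⁻ t in Set.Ioi (0 : ℝ), ENNReal.ofReal (φ t x) * ENNReal.ofReal (t ^ (p - 1))) +
          ∫⁻ x, ∫⁻ t in Set.Ioi (0 : ℝ),
            ENNReal.ofReal (χ t x) * ENNReal.ofReal (t ^ (p - 1))) := by
      rw [lintegral_const_mul' _ _ ENNReal.ofReal_ne_top,
        lintegral_add_left hφ'.lintegral_prod_right,
        lintegral_lintegral_swap hφ'.aemeasurable, lintegral_lintegral_swap hχ'.aemeasurable]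
    _ ≤ ENNReal.ofReal A *
        ((∫⁻ x, ENNReal.ofReal ((p - 1)⁻¹) * ENNReal.ofReal (‖f x‖ ^ p)) +
          ∫⁻ x, ENNReal.ofReal (2 ^ (2 - p) * (2 - p)⁻¹) * ENNReal.ofReal (‖f x‖ ^ p)) := by
      gcongr with x x
      · exact lintegral_Ioi_ite_lt_mul_rpow_le (norm_nonneg _) hp1
      · exact lintegral_Ioi_ite_gt_mul_rpow_le (norm_nonneg _) hp2
    _ = _ := by
      rw [lintegral_const_mul' _ _ ENNReal.ofReal_ne_top,
        lintegral_const_mul' _ _ ENNReal.ofReal_ne_top, ← add_mul, ← mul_assoc,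
        ← ENNReal.ofReal_add hc1 hc2, ← ENNReal.ofReal_mul hA]

/-- The Hardy–Littlewood–Paley inequality for Schwartz functions, in terms of lower integrals. -/
theorem lintegral_weight_FT_le (d : ℕ) (hd : 1 ≤ d) {p : ℝ} (hp1 : 1 < p) (hp2 : p ≤ 2) :
    ∃ C ≥ (0 : ℝ), ∀ f : SchwartzMap (E d) ℂ,
      ∫⁻ ξ, ENNReal.ofReal ((1 + ‖ξ‖ ^ 2) ^ (-(d * (2 - p)) / 2) * ‖FT d f ξ‖ ^ p) ≤
        ENNReal.ofReal C * ∫⁻ x, ENNReal.ofReal (‖f x‖ ^ p) := by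
  rcases hp2.eq_or_lt with rfl | hp2
  · refine ⟨(2 * π) ^ d, by positivity, fun f ↦ le_of_eq ?_⟩
    simpa using lintegral_norm_FT_sq f
  obtain ⟨C, hC, hCf⟩ := lintegral_japaneseMeasure_FT_le d hd hp1 hp2
  refine ⟨C, hC, fun f ↦ (le_of_eq ?_).trans (hCf f)⟩
  have hFm : Measurable fun ξ ↦ ‖FT d f ξ‖ := (continuous_FT f).norm.measurable
  rw [japaneseMeasure, lintegral_withDensity_eq_lintegral_mul _ (by fun_prop) (by fun_prop)]
  congr 1 with ξ
  rw [Pi.mul_apply, ← ENNReal.ofReal_mul (by positivity), mul_rpow (by positivity) (by positivity),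
    ← mul_assoc, ← rpow_mul (by positivity), ← rpow_add (by positivity)]
  congr 3
  ring

/-- the Hardy–Littlewood–Paley type inequality: for `1 < p ≤ 2` and
`k = 2d(1/p - 1/2)`, `(∫ (1+|ξ|²)^{-kp/2} |ℱf(ξ)|^p dξ)^{1/p} ≤ C·‖f‖_{L^p(ℝ^d)}`. -/
theorem stmt17 (d : ℕ) (hd : 1 ≤ d) (p : ℝ) (hp1 : 1 < p) (hp2 : p ≤ 2)
    (k : ℝ) (hk : k = 2 * d * (1 / p - 1 / 2)) :
    ∃ C > (0 : ℝ), ∀ f : SchwartzMap (E d) ℂ,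
      (∫ ξ : E d, (1 + ‖ξ‖ ^ 2) ^ (-(k * p) / 2) * ‖FT d (⇑f) ξ‖ ^ p) ^ (1 / p) ≤
        C * (∫ x : E d, ‖f x‖ ^ p) ^ (1 / p) := by
  obtain ⟨C, hC, hCf⟩ := lintegral_weight_FT_le d hd hp1 hp2
  have hp0 : 0 < p := by linarith
  have hkp : k * p = d * (2 - p) := by rw [hk]; field_simp
  refine ⟨(C + 1) ^ (1 / p), by positivity, fun f ↦ ?_⟩
  have hFm : Measurable fun ξ ↦ ‖FT d f ξ‖ := (continuous_FT f).norm.measurable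
  have hf : Integrable fun x ↦ ‖f x‖ ^ p := by
    have := (f.memLp (ENNReal.ofReal p) volume).integrable_norm_rpow (by simpa using hp0)
      ENNReal.ofReal_ne_top
    rwa [ENNReal.toReal_ofReal hp0.le] at this
  rw [hkp, ← mul_rpow (by positivity) (by positivity)]
  refine rpow_le_rpow (by positivity) ?_ (by positivity)
  have hI : 0 ≤ ∫ x, ‖f x‖ ^ p := by positivity
  rw [integral_eq_lintegral_of_nonneg_ae (.of_forall fun _ ↦ by positivity)
    (Measurable.aestronglyMeasurable (by fun_prop))]
  refine ENNReal.toReal_le_of_le_ofReal (by positivity) ((hCf f).trans ?_)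
  rw [← ofReal_integral_eq_lintegral_ofReal hf (.of_forall fun _ ↦ by positivity),
    ← ENNReal.ofReal_mul hC]
  exact ENNReal.ofReal_le_ofReal (by gcongr; linarith)
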